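/- Let D be a non-dictatorial, unidimensional domain and fix n ≥ 2. The following are equivalent: (1) there exists an anonymous, tops-only and strategy-proof rule f : D^n → A; (2) D is a semi-single-peaked domain; (3) there exist a tree T on A and x̄ ∈ A such that the projection rule f : D^n → A on T w.r.t. x̄ is strategy-proof. -/

import Mathlib

open Classical

/-- A strict preference over `A`, represented as a ranking bijection:
`P k` is the `(k+1)`-th ranked alternative. -/
abbrev Pref (A : Type*) [Fintype A] := Fin (Fintype.card A) ≃ A

variable {A : Type*} [Fintype A] [DecidableEq A] [Nonempty A]

/-- `rk P k` : the `(k+1)`-th ranked alternative of `P` (0-indexed, so `rk P 0 = r₁(P)`). -/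
noncomputable def rk (P : Pref A) (k : ℕ) : A :=
  if h : k < Fintype.card A then P ⟨k, h⟩ else Classical.arbitrary A

/-- The peak `r₁(P)`. -/
noncomputable def peak (P : Pref A) : A := rk P 0

/-- The second-ranked alternative `r₂(P)`. -/
noncomputable def second (P : Pref A) : A := rk P 1

/-- `a` is strictly preferred to `b` under `P`. -/
def prefers (P : Pref A) (a b : A) : Prop := P.symm a < P.symm b

/-- Two preferences are completely reversed. -/
def Reversed (P P' : Pref A) : Prop := ∀ a b : A, prefers P a b ↔ prefers P' b a

/-- A profile lies in the domain `D`. -/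
def InDom (D : Set (Pref A)) {n : ℕ} (P : Fin n → Pref A) : Prop := ∀ i, P i ∈ D

/-- Unanimity (an SCF satisfying it is called a rule). -/
def IsRule (D : Set (Pref A)) {n : ℕ} (f : (Fin n → Pref A) → A) : Prop :=
  ∀ P : Fin n → Pref A, InDom D P → ∀ a : A, (∀ i, peak (P i) = a) → f P = a

/-- Strategy-proofness (relative to the domain `D`). -/
def StrategyProof (D : Set (Pref A)) {n : ℕ} (f : (Fin n → Pref A) → A) : Prop :=
  ∀ P : Fin n → Pref A, InDom D P → ∀ i : Fin n, ∀ Q ∈ D,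
    f P = f (Function.update P i Q) ∨ prefers (P i) (f P) (f (Function.update P i Q))

/-- The tops-only property. -/
def TopsOnly (D : Set (Pref A)) {n : ℕ} (f : (Fin n → Pref A) → A) : Prop :=
  ∀ P P' : Fin n → Pref A, InDom D P → InDom D P' →
    (∀ i, peak (P i) = peak (P' i)) → f P = f P'

/-- Anonymity. -/
def Anonymous (D : Set (Pref A)) {n : ℕ} (f : (Fin n → Pref A) → A) : Prop :=
  ∀ P : Fin n → Pref A, InDom D P → ∀ σ : Equiv.Perm (Fin n), f (P ∘ σ) = f P

/-- `f` behaves like a dictatorship on `B`. -/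
def DictatorOn (D : Set (Pref A)) {n : ℕ} (f : (Fin n → Pref A) → A) (B : Set A) : Prop :=
  ∃ i : Fin n, ∀ P : Fin n → Pref A, InDom D P → (∀ j, peak (P j) ∈ B) → f P = peak (P i)

/-- `f` is a dictatorship. -/
def Dictatorship (D : Set (Pref A)) {n : ℕ} (f : (Fin n → Pref A) → A) : Prop :=
  DictatorOn D f Set.univ

/-- A dictatorial domain. -/
def DictatorialDomain (D : Set (Pref A)) : Prop :=
  ∀ n : ℕ, 2 ≤ n → ∀ f : (Fin n → Pref A) → A,
    IsRule D f → StrategyProof D f → Dictatorship D f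

/-- A tops-only domain. -/
def TopsOnlyDomain (D : Set (Pref A)) : Prop :=
  ∀ n : ℕ, 2 ≤ n → ∀ f : (Fin n → Pref A) → A,
    IsRule D f → StrategyProof D f → TopsOnly D f

/-- Adjacency of two alternatives relative to the domain `D`. -/
def DomAdjacent (D : Set (Pref A)) (a b : A) : Prop :=
  ∃ P ∈ D, ∃ P' ∈ D, peak P = a ∧ second P = b ∧ peak P' = b ∧ second P' = a ∧
    ∀ k : ℕ, 2 ≤ k → rk P k = rk P' k

/-- The adjacency graph `G_∼` of the domain `D`. -/
noncomputable def adjGraph (D : Set (Pref A)) : SimpleGraph A :=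
  SimpleGraph.fromRel (DomAdjacent D)

/-- Path-connectedness of the domain. -/
def PathConnectedDom (D : Set (Pref A)) : Prop := (adjGraph D).Connected

/-- Diversity: the domain contains two completely reversed preferences. -/
def Diversity (D : Set (Pref A)) : Prop := ∃ P ∈ D, ∃ P' ∈ D, Reversed P P'

/-- `S(D^a)`: the set of alternatives second-ranked in some preference of `D` with peak `a`. -/
def secondsSet (D : Set (Pref A)) (a : A) : Set A := {b | ∃ P ∈ D, peak P = a ∧ second P = b}

/-- Leaf symmetry. -/
def LeafSymmetry (D : Set (Pref A)) : Prop :=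
  ∀ x : A, (∃! y, (adjGraph D).Adj x y) →
    (∃ u ∈ secondsSet D x, ∃ v ∈ secondsSet D x, u ≠ v) →
    ∃ z ∈ secondsSet D x, ¬ (adjGraph D).Adj x z ∧ x ∈ secondsSet D z

/-- Unidimensionality: path-connectedness, diversity and leaf symmetry. -/
def Unidimensional (D : Set (Pref A)) : Prop :=
  PathConnectedDom D ∧ Diversity D ∧ LeafSymmetry D

/-- The unique seconds property. -/
def UniqueSeconds (D : Set (Pref A)) : Prop := ∃ x b : A, secondsSet D x = {b}

/-- Minimal richness. -/
def MinimallyRich (D : Set (Pref A)) : Prop := ∀ a : A, ∃ P ∈ D, peak P = a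

/-- The vertex set `⟨x, y|T⟩` of the (in a tree, unique) shortest path between `x` and `y`. -/
def intv (T : SimpleGraph A) (x y : A) : Set A :=
  {z | T.dist x z + T.dist z y = T.dist x y}

/-- `a'` is the projection of `a` onto `B` in `T`. -/
def IsProjPt (T : SimpleGraph A) (B : Set A) (a a' : A) : Prop :=
  a' ∈ B ∧ ∀ b ∈ B, a' ∈ intv T a b

/-- The projection `Proj(a, B)` of `a` onto a path-closed set `B` in the tree `T`. -/
noncomputable def projOn (T : SimpleGraph A) (B : Set A) (a : A) : A :=
  if h : ∃ a', IsProjPt T B a a' then h.choose else a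

/-- `Γ(P)`: the vertex set of the minimal subtree of `T` spanning all the peaks. -/
def gammaSet (T : SimpleGraph A) {n : ℕ} (P : Fin n → Pref A) : Set A :=
  {c | ∃ i j : Fin n, c ∈ intv T (peak (P i)) (peak (P j))}

/-- The projection rule on `T` w.r.t. `xbar`. -/
noncomputable def projRule (T : SimpleGraph A) (xbar : A) {n : ℕ}
    (P : Fin n → Pref A) : A :=
  projOn T (gammaSet T P) xbar

/-- Single-peakedness on a tree. -/
def SinglePeaked (T : SimpleGraph A) (P : Pref A) : Prop :=
  ∀ c d : A, c ≠ d → c ∈ intv T (peak P) d → prefers P c d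

/-- Semi-single-peakedness on `T` w.r.t. the threshold `xbar`. -/
def SemiSP (T : SimpleGraph A) (xbar : A) (P : Pref A) : Prop :=
  (∀ c d : A, c ∈ intv T (peak P) xbar → d ∈ intv T (peak P) xbar → c ≠ d →
    c ∈ intv T (peak P) d → prefers P c d) ∧
  (∀ c : A, c ∉ intv T (peak P) xbar →
    prefers P (projOn T (intv T (peak P) xbar) c) c)

/-- A semi-single-peaked domain. -/
def SemiSPDomain (D : Set (Pref A)) : Prop :=
  ∃ (T : SimpleGraph A) (xbar : A), T.IsTree ∧
    D ⊆ {P | SemiSP T xbar P} ∧ (adjGraph D).Connected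

/-- `A^{a⇀b}`: the alternatives whose path to `b` goes through `a`. -/
def sideSet (T : SimpleGraph A) (a b : A) : Set A := {z | a ∈ intv T z b}

/-- `x = max^P(B)`: `x` is `P`'s best alternative of `B`. -/
def IsBestOf (P : Pref A) (x : A) (B : Set A) : Prop :=
  x ∈ B ∧ ∀ y ∈ B, y ≠ x → prefers P x y

/-- `a` and `b` are dual-thresholds in the tree `T`. -/
def DualThresholds (T : SimpleGraph A) (a b : A) : Prop :=
  a ≠ b ∧ ∀ c : A, c ∉ intv T a b →
    projOn T (intv T a b) c = a ∨ projOn T (intv T a b) c = b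

/-- An `(a,b)`-semi-hybrid preference on `T`. -/
def SemiHybridPref (T : SimpleGraph A) (a b : A) (P : Pref A) : Prop :=
  (peak P ∈ sideSet T a b \ {a} → SemiSP T a P ∧ IsBestOf P b (sideSet T b a)) ∧
  (peak P ∈ sideSet T b a \ {b} → SemiSP T b P ∧ IsBestOf P a (sideSet T a b)) ∧
  (peak P ∈ intv T a b → IsBestOf P a (sideSet T a b) ∧ IsBestOf P b (sideSet T b a))

/-- `x` is a leaf of the subgraph of `G` induced on `B`. -/
def IsLeafOn (G : SimpleGraph A) (B : Set A) (x : A) : Prop :=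
  x ∈ B ∧ ∃! y, y ∈ B ∧ G.Adj x y

/-- `D` is an `(a,b)`-semi-hybrid domain on the tree `T`. -/
def SemiHybridDomainOn (D : Set (Pref A)) (T : SimpleGraph A) (a b : A) : Prop :=
  T.IsTree ∧ DualThresholds T a b ∧ D ⊆ {P | SemiHybridPref T a b P} ∧
  (adjGraph D).Connected ∧
  (¬ ∃ (T' : SimpleGraph A) (a' b' : A), T'.IsTree ∧ DualThresholds T' a' b' ∧
      D ⊆ {P | SemiHybridPref T' a' b' P} ∧ intv T' a' b' ⊂ intv T a b) ∧
  ((adjGraph D).IsTree →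
    ∀ x : A, IsLeafOn (adjGraph D) (intv T a b) x →
      ∃ P ∈ D, ¬ SemiSP (adjGraph D) x P)

/-- `D` is a semi-hybrid domain. -/
def SemiHybridDomain (D : Set (Pref A)) : Prop :=
  ∃ (T : SimpleGraph A) (a b : A), SemiHybridDomainOn D T a b

/-- An `(a,b)`-hybrid preference on `T`. -/
def HybridPref (T : SimpleGraph A) (a b : A) (P : Pref A) : Prop :=
  (∀ y z : A, ((y ∈ sideSet T a b ∧ z ∈ sideSet T a b) ∨
      (y ∈ sideSet T b a ∧ z ∈ sideSet T b a)) → y ≠ z →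
    y ∈ intv T (peak P) z → prefers P y z) ∧
  (peak P ∈ sideSet T a b \ {a} → IsBestOf P a (intv T a b)) ∧
  (peak P ∈ sideSet T b a \ {b} → IsBestOf P b (intv T a b))

/-- `D` is an `(a,b)`-hybrid domain on the tree `T`. -/
def HybridDomainOn (D : Set (Pref A)) (T : SimpleGraph A) (a b : A) : Prop :=
  T.IsTree ∧ DualThresholds T a b ∧ D ⊆ {P | HybridPref T a b P} ∧
  (adjGraph D).Connected ∧
  (¬ ∃ (T' : SimpleGraph A) (a' b' : A), T'.IsTree ∧ DualThresholds T' a' b' ∧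
      D ⊆ {P | HybridPref T' a' b' P} ∧ intv T' a' b' ⊂ intv T a b) ∧
  3 ≤ (intv T a b).ncard

/-- `f` is an `(a,b)`-hybrid rule on the tree `T`. -/
def IsHybridRule (D : Set (Pref A)) {n : ℕ} (f : (Fin n → Pref A) → A)
    (T : SimpleGraph A) (a b : A) : Prop :=
  T.IsTree ∧ DualThresholds T a b ∧ 3 ≤ (intv T a b).ncard ∧
  ∃ i : Fin n, ∀ P : Fin n → Pref A, InDom D P →
    (peak (P i) ∈ intv T a b → f P = peak (P i)) ∧
    (peak (P i) ∈ sideSet T a b \ {a} → f P = projOn T (gammaSet T P) a) ∧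
    (peak (P i) ∈ sideSet T b a \ {b} → f P = projOn T (gammaSet T P) b)

/-- The PNT rule on `T` w.r.t. the edge `(x, y)`, with the two distinguished voters `i, j`. -/
noncomputable def pntRule (T : SimpleGraph A) (x y : A) {n : ℕ} (i j : Fin n)
    (P : Fin n → Pref A) : A :=
  if peak (P i) ∈ sideSet T y x then peak (P i)
  else if peak (P j) ∈ sideSet T x y then projOn T (gammaSet T P) x
  else if prefers (P j) x y then x else y

/-- `(x, y)` is a critical spot in `T` for the domain `D`. -/
def CriticalSpot (D : Set (Pref A)) (T : SimpleGraph A) (x y : A) : Prop :=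
  T.Adj x y ∧
  (∀ P ∈ D, peak P ∈ sideSet T x y → SemiSP T y P) ∧
  (∀ P ∈ D, peak P ∈ sideSet T y x → IsBestOf P x (sideSet T x y)) ∧
  (∃ P ∈ D, ∃ P' ∈ D, peak P = peak P' ∧ peak P ∈ sideSet T y x ∧
    prefers P y x ∧ prefers P' x y)

/-- `x` is a path in the graph `G` (pairwise distinct, consecutive vertices adjacent). -/
def IsPathIn (G : SimpleGraph A) {v : ℕ} (x : Fin v → A) : Prop :=
  Function.Injective x ∧
  ∀ (k : ℕ) (h : k + 1 < v), G.Adj (x ⟨k, Nat.lt_of_succ_lt h⟩) (x ⟨k + 1, h⟩)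

/-- `x` is a cycle in the graph `G`. -/
def IsCycleIn (G : SimpleGraph A) {v : ℕ} (x : Fin v → A) : Prop :=
  Function.Injective x ∧
  (∀ (k : ℕ) (h : k + 1 < v), G.Adj (x ⟨k, Nat.lt_of_succ_lt h⟩) (x ⟨k + 1, h⟩)) ∧
  ∀ (h : 0 < v), G.Adj (x ⟨v - 1, Nat.sub_lt h Nat.one_pos⟩) (x ⟨0, h⟩)

/-- The line `L^A` induced by the ranking of the preference `P`. -/
noncomputable def lineOf (P : Pref A) : SimpleGraph A :=
  SimpleGraph.fromRel (fun a b =>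
    ∃ k : ℕ, k + 1 < Fintype.card A ∧ rk P k = a ∧ rk P (k + 1) = b)

/-- The median of three natural numbers. -/
def med3 (a b c : ℕ) : ℕ := max (min a b) (min (max a b) c)

/-- The two-voter profile in which voter `i` reports `Pi` and the other voter reports `Q`. -/
noncomputable def prof2 (i : Fin 2) (Pi Q : Pref A) : Fin 2 → Pref A :=
  Function.update (fun _ => Q) i Pi

/-!
A tops-only rule depends only on the reported peaks. Adjacent alternatives are the peaks of two
preferences that disagree on nothing else, so when a group of voters moves its common peak along an
edge of the adjacency graph, the outcome either stays put or follows the edge. Consequently a group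
that can enforce both ends of a path can enforce every vertex on it.

Suppose the rule is anonymous and the edge `x y` lies on a cycle. Growing a coalition one voter at a
time, and exchanging the newcomer with a voter outside, shows that a single voter holding out at `y`
against everybody else at `x` gets `y`. The same argument with `x` and `y` exchanged gives `x`, a
contradiction; so the adjacency graph is a tree. Counting then yields a vertex `x` from which no
single voter can move a unanimous society, and comparing what one voter gets by reporting the truth
or the alternative under comparison shows that every preference is semi-single-peaked with
respect to `x`.

Conversely, in the tree order rooted at `x` the projection rule is the meet of the peaks. A
deviation either moves the outcome towards `x`, past the old outcome, or moves it to a point whose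
projection onto the path from the true peak to `x` is the old outcome. Neither
benefits the deviator when preferences are semi-single-peaked.
-/

section Interval

variable {V : Type*} {G : SimpleGraph V} {a b d w x y z : V}

lemma mem_intv_iff : z ∈ intv G x y ↔ G.dist x z + G.dist z y = G.dist x y := Iff.rfl

lemma intv_comm (G : SimpleGraph V) (x y : V) : intv G x y = intv G y x := by
  ext z
  simp only [mem_intv_iff, G.dist_comm (u := x), G.dist_comm (u := z) (v := y)]
  rw [add_comm]

lemma left_mem_intv (G : SimpleGraph V) (x y : V) : x ∈ intv G x y := by simp [intv]

lemma right_mem_intv (G : SimpleGraph V) (x y : V) : y ∈ intv G x y := by simp [intv]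

lemma mem_intv_self_iff (hG : G.Connected) : a ∈ intv G x x ↔ a = x := by
  simp only [mem_intv_iff, SimpleGraph.dist_self, Nat.add_eq_zero_iff,
    hG.dist_eq_zero_iff, and_iff_left_of_imp Eq.symm]
  exact eq_comm

lemma intv_subset_intv_right (hG : G.Connected) (hz : z ∈ intv G x y) :
    intv G z y ⊆ intv G x y := by
  intro w hw
  have := hG.dist_triangle (u := x) (v := z) (w := w)
  have := hG.dist_triangle (u := x) (v := w) (w := y)
  simp only [mem_intv_iff] at *
  omega

lemma intv_subset_intv_left (hG : G.Connected) (hz : z ∈ intv G x y) :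
    intv G x z ⊆ intv G x y := by
  rw [intv_comm G x y] at *
  rw [intv_comm G x z]
  exact intv_subset_intv_right hG hz

lemma mem_intv_left_of_mem_intv (hG : G.Connected) (hz : z ∈ intv G x y) (hw : w ∈ intv G z y) :
    z ∈ intv G x w := by
  have := hG.dist_triangle (u := x) (v := z) (w := w)
  have := hG.dist_triangle (u := x) (v := w) (w := y)
  simp only [mem_intv_iff] at *
  omega

lemma intv_antisymm (hG : G.Connected) (ha : a ∈ intv G x b) (hb : b ∈ intv G x a) : a = b := by
  have hab : G.dist a b = 0 := by
    simp only [mem_intv_iff, G.dist_comm (u := b)] at *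
    omega
  exact hG.dist_eq_zero_iff.mp hab

lemma mem_intv_of_mem_support (hG : G.Connected) {p : G.Walk x y} (hp : p.length = G.dist x y)
    (ha : a ∈ p.support) : a ∈ intv G x y := by
  obtain ⟨q, r, rfl⟩ := SimpleGraph.Walk.mem_support_iff_exists_append.mp ha
  have := SimpleGraph.dist_le q
  have := SimpleGraph.dist_le r
  have := hG.dist_triangle (u := x) (v := a) (w := y)
  simp only [mem_intv_iff, SimpleGraph.Walk.length_append] at *
  omega

lemma exists_adj_mem_intv (hG : G.Connected) (hxy : x ≠ y) :
    ∃ z, G.Adj x z ∧ z ∈ intv G x y := by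
  obtain ⟨p, hp⟩ := hG.exists_walk_length_eq_dist x y
  cases p with
  | nil => exact absurd rfl hxy
  | @cons _ z _ hxz q =>
    exact ⟨z, hxz, mem_intv_of_mem_support hG hp (by simp)⟩

end Interval

section Tree

variable {V : Type*} {T : SimpleGraph V} {a b m p q x y z : V}

lemma mem_support_of_mem_intv (hT : T.IsTree) (ha : a ∈ intv T x y) (w : T.Walk x y) :
    a ∈ w.support := by
  obtain ⟨p, hp⟩ := hT.connected.exists_walk_length_eq_dist x a
  obtain ⟨q, hq⟩ := hT.connected.exists_walk_length_eq_dist a y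
  have hpq : (p.append q).IsPath := (p.append q).isPath_of_length_eq_dist <| by
    rw [SimpleGraph.Walk.length_append, hp, hq]
    exact ha
  have huniq : w.bypass = p.append q := congrArg Subtype.val <|
    (hT.isAcyclic.subsingleton_path x y).elim ⟨w.bypass, w.bypass_isPath⟩ ⟨p.append q, hpq⟩
  refine w.support_bypass_subset_support ?_
  rw [huniq]
  exact p.mem_support_append_iff q |>.mpr (Or.inl p.end_mem_support)

lemma mem_intv_or_mem_intv (hT : T.IsTree) (ha : a ∈ intv T x y) (z : V) :
    a ∈ intv T x z ∨ a ∈ intv T z y := by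
  obtain ⟨p, hp⟩ := hT.connected.exists_walk_length_eq_dist x z
  obtain ⟨q, hq⟩ := hT.connected.exists_walk_length_eq_dist z y
  exact (p.mem_support_append_iff q).mp (mem_support_of_mem_intv hT ha (p.append q)) |>.imp
    (mem_intv_of_mem_support hT.connected hp) (mem_intv_of_mem_support hT.connected hq)

lemma mem_intv_total (hT : T.IsTree) (ha : a ∈ intv T x y) (hb : b ∈ intv T x y) :
    a ∈ intv T x b ∨ b ∈ intv T x a := by
  refine (mem_intv_or_mem_intv hT ha b).imp_right fun hab => ?_
  exact mem_intv_left_of_mem_intv hT.connected hb hab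

lemma mem_intv_of_mem_intv_both (hT : T.IsTree) (hp : m ∈ intv T x p) (hq : m ∈ intv T x q)
    (hb : b ∈ intv T p q) : m ∈ intv T x b := by
  rcases mem_intv_or_mem_intv hT hp b with h | h
  · exact h
  rcases mem_intv_or_mem_intv hT hq b with h' | h'
  · exact h'
  have hbm : b = m := by
    have := hT.connected.dist_triangle (u := p) (v := m) (w := q)
    refine hT.connected.dist_eq_zero_iff.mp ?_
    simp only [mem_intv_iff, T.dist_comm (u := p)] at *
    omega
  exact hbm ▸ right_mem_intv T x b

/-- A vertex set is path-closed when it contains every interval between its points. These are the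
sets onto which `projOn` is a genuine projection rather than its default value. -/
def PathClosed (T : SimpleGraph V) (B : Set V) : Prop :=
  ∀ a ∈ B, ∀ b ∈ B, intv T a b ⊆ B

lemma pathClosed_intv (hT : T.IsTree) (x y : V) : PathClosed T (intv T x y) := by
  intro a ha b hb c hc
  rcases mem_intv_or_mem_intv hT hc x with h | h
  · rw [intv_comm T a x] at h
    exact intv_subset_intv_left hT.connected ha h
  · exact intv_subset_intv_left hT.connected hb h

lemma exists_isProjPt (hT : T.IsTree) {B : Set V} (hB : PathClosed T B) (hne : B.Nonempty)
    (x : V) : ∃ m, IsProjPt T B x m := by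
  obtain ⟨m, hmB, hmin⟩ := exists_minimalFor_of_wellFoundedLT (· ∈ B) (T.dist x) hne
  refine ⟨m, hmB, fun b hb => ?_⟩
  by_cases hmb : m = b
  · exact hmb ▸ right_mem_intv T x m
  obtain ⟨t, hmt, htb⟩ := exists_adj_mem_intv hT.connected hmb
  have htB : t ∈ B := hB m hmB b hb htb
  have hxt : m ∈ intv T x t := by
    have h1 := SimpleGraph.dist_eq_one_iff_adj.mpr hmt
    have := hT.dist_ne_of_adj x hmt
    have := hT.connected.dist_triangle (u := x) (v := m) (w := t)
    have : T.dist x m ≤ T.dist x t := (le_total _ _).elim id (hmin htB)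
    simp only [mem_intv_iff]
    omega
  refine (mem_intv_or_mem_intv hT hxt b).resolve_right fun h => ?_
  rw [intv_comm] at htb
  exact hmt.ne (intv_antisymm hT.connected h htb)

lemma isProjPt_unique (hG : T.Connected) {B : Set V} (ha : IsProjPt T B x a)
    (hb : IsProjPt T B x b) : a = b :=
  intv_antisymm hG (ha.2 b hb.1) (hb.2 a ha.1)

end Tree

section Projection

variable {α : Type*} [Fintype α] {T : SimpleGraph α} {B : Set α} {m x : α}

lemma projOn_isProjPt (h : ∃ m, IsProjPt T B x m) : IsProjPt T B x (projOn T B x) := by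
  rw [projOn, dif_pos h]
  exact h.choose_spec

lemma projOn_eq (hT : T.Connected) (hm : IsProjPt T B x m) : projOn T B x = m :=
  isProjPt_unique hT (projOn_isProjPt ⟨m, hm⟩) hm

end Projection

section ProjectionRule

variable {α : Type*} [Fintype α] [Nonempty α] {T : SimpleGraph α} {n : ℕ}

lemma peak_mem_gammaSet (T : SimpleGraph α) (P : Fin n → Pref α) (i : Fin n) :
    peak (P i) ∈ gammaSet T P :=
  ⟨i, i, left_mem_intv T _ _⟩

lemma pathClosed_gammaSet (hT : T.IsTree) (P : Fin n → Pref α) : PathClosed T (gammaSet T P) := by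
  rintro a ⟨i, j, ha⟩ b ⟨k, l, hb⟩ c hc
  rcases mem_intv_or_mem_intv hT hc (peak (P i)) with hai | hib
  · rw [intv_comm] at hai
    exact ⟨i, j, intv_subset_intv_left hT.connected ha hai⟩
  rcases mem_intv_or_mem_intv hT hib (peak (P k)) with hik | hkb
  · exact ⟨i, k, hik⟩
  · exact ⟨k, l, intv_subset_intv_left hT.connected hb hkb⟩

lemma projRule_isProjPt (hT : T.IsTree) (x : α) (i : Fin n) (P : Fin n → Pref α) :
    IsProjPt T (gammaSet T P) x (projRule T x P) :=
  projOn_isProjPt <|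
    exists_isProjPt hT (pathClosed_gammaSet hT P) ⟨_, peak_mem_gammaSet T P i⟩ x

/- In the tree order rooted at `x`, the next two lemmas make `projRule T x P` the meet of the
peaks. -/
lemma projRule_mem_intv_peak (hT : T.IsTree) (x : α) (P : Fin n → Pref α) (i : Fin n) :
    projRule T x P ∈ intv T x (peak (P i)) :=
  (projRule_isProjPt hT x i P).2 _ (peak_mem_gammaSet T P i)

lemma mem_intv_projRule (hT : T.IsTree) {m x : α} {P : Fin n → Pref α} (i : Fin n)
    (hm : ∀ j, m ∈ intv T x (peak (P j))) : m ∈ intv T x (projRule T x P) := by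
  obtain ⟨j, k, hjk⟩ := (projRule_isProjPt hT x i P).1
  exact mem_intv_of_mem_intv_both hT (hm j) (hm k) hjk

lemma projRule_isRule (hT : T.IsTree) (x : α) (hn : 0 < n) (D : Set (Pref α)) :
    IsRule D (projRule T x (n := n)) := by
  rintro P - a ha
  obtain ⟨i, j, hij⟩ := (projRule_isProjPt hT x ⟨0, hn⟩ P).1
  rw [ha i, ha j] at hij
  exact (mem_intv_self_iff hT.connected).mp hij

lemma projRule_topsOnly (T : SimpleGraph α) (x : α) (D : Set (Pref α)) :
    TopsOnly D (projRule T x (n := n)) := by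
  intro P Q _ _ h
  simp only [projRule, gammaSet, h]

lemma projRule_anonymous (T : SimpleGraph α) (x : α) (D : Set (Pref α)) :
    Anonymous D (projRule T x (n := n)) := by
  intro P _ σ
  have hΓ : gammaSet T (P ∘ σ) = gammaSet T P := Set.ext fun c =>
    σ.exists_congr fun _ => (σ.exists_congr fun _ => Iff.rfl)
  simp only [projRule, hΓ]

lemma projRule_update (hT : T.IsTree) (x : α) (hn : 2 ≤ n) (P : Fin n → Pref α) (i : Fin n)
    (Q : Pref α) :
    projRule T x (Function.update P i Q) ∈ intv T x (projRule T x P) ∨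
      IsProjPt T (intv T (peak (P i)) x) (projRule T x (Function.update P i Q))
        (projRule T x P) := by
  set r := projRule T x P
  set r' := projRule T x (Function.update P i Q)
  have hr : ∀ j, r ∈ intv T x (peak (P j)) := projRule_mem_intv_peak hT x P
  have hr' : ∀ j ≠ i, r' ∈ intv T x (peak (P j)) := fun j hj => by
    simpa only [Function.update_of_ne hj] using
      projRule_mem_intv_peak hT x (Function.update P i Q) j
  have : Nontrivial (Fin n) := Fin.nontrivial_iff_two_le.mpr hn
  obtain ⟨j, hji⟩ := exists_ne i
  refine (mem_intv_total hT (hr' j hji) (hr j)).imp_right fun hrr' => ?_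
  obtain ⟨m, hm⟩ := exists_isProjPt hT (pathClosed_intv hT (peak (P i)) x)
    ⟨x, right_mem_intv T _ x⟩ r'
  have hmr : m ∈ intv T x r := mem_intv_projRule hT i fun k => by
    by_cases hk : k = i
    · rw [hk, intv_comm]
      exact hm.1
    · refine intv_subset_intv_left hT.connected (hr' k hk) ?_
      rw [intv_comm]
      exact hm.2 x (right_mem_intv T _ x)
  have hrm : r ∈ intv T x m :=
    mem_intv_of_mem_intv_both hT hrr' (hr i) (hm.2 _ (left_mem_intv T _ x))
  obtain rfl : m = r := intv_antisymm hT.connected hmr hrm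
  exact hm

lemma projRule_strategyProof (hT : T.IsTree) {x : α} {D : Set (Pref α)}
    (hD : ∀ P ∈ D, SemiSP T x P) (hn : 2 ≤ n) : StrategyProof D (projRule T x (n := n)) := by
  intro P hP i Q _
  obtain ⟨hpath, hproj⟩ := hD (P i) (hP i)
  have hr : projRule T x P ∈ intv T (peak (P i)) x := by
    rw [intv_comm]
    exact projRule_mem_intv_peak hT x P i
  refine or_iff_not_imp_left.mpr fun hne => ?_
  rcases projRule_update hT x hn P i Q with hmem | hprojPt
  · rw [intv_comm] at hmem
    exact hpath _ _ hr (intv_subset_intv_right hT.connected hr hmem) hne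
      (mem_intv_left_of_mem_intv hT.connected hr hmem)
  · have hnot : projRule T x (Function.update P i Q) ∉ intv T (peak (P i)) x := fun h =>
      hne ((mem_intv_self_iff hT.connected).mp (hprojPt.2 _ h))
    exact projOn_eq hT.connected hprojPt ▸ hproj _ hnot

end ProjectionRule

section Preferences

variable {α : Type*} [Fintype α] {P : Pref α} {a b c : α}

/-- `a` is at least as good as `b` under `P`. -/
def WeaklyPrefers (P : Pref α) (a b : α) : Prop := P.symm a ≤ P.symm b

lemma weaklyPrefers_iff : WeaklyPrefers P a b ↔ a = b ∨ prefers P a b := by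
  rw [WeaklyPrefers, le_iff_eq_or_lt, P.symm.injective.eq_iff, prefers]

lemma WeaklyPrefers.prefers (h : WeaklyPrefers P a b) (hab : a ≠ b) : prefers P a b :=
  (weaklyPrefers_iff.mp h).resolve_left hab

lemma WeaklyPrefers.trans (hab : WeaklyPrefers P a b) (hbc : WeaklyPrefers P b c) :
    WeaklyPrefers P a c :=
  le_trans hab hbc

lemma WeaklyPrefers.antisymm (hab : WeaklyPrefers P a b) (hba : WeaklyPrefers P b a) : a = b :=
  P.symm.injective (le_antisymm hab hba)

variable [Nonempty α] {D : Set (Pref α)}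

lemma rk_val (P : Pref α) (k : Fin (Fintype.card α)) : rk P k = P k := by
  simp [rk]

lemma val_symm_rk (P : Pref α) {k : ℕ} (hk : k < Fintype.card α) : (P.symm (rk P k) : ℕ) = k := by
  simp [rk, hk]

lemma weaklyPrefers_peak (P : Pref α) (a : α) : WeaklyPrefers P (peak P) a := by
  rw [WeaklyPrefers, Fin.le_def, peak, val_symm_rk P Fintype.card_pos]
  exact Nat.zero_le _

lemma adjGraph_adj : (adjGraph D).Adj a b ↔ a ≠ b ∧ DomAdjacent D a b := by
  rw [adjGraph, SimpleGraph.fromRel_adj, and_congr_right_iff]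
  refine fun _ => or_iff_left_of_imp ?_
  rintro ⟨P, hP, P', hP', h0, h1, h0', h1', hk⟩
  exact ⟨P', hP', P, hP, h0', h1', h0, h1, fun k hk2 => (hk k hk2).symm⟩

lemma exists_swap_of_adj (hab : (adjGraph D).Adj a b) :
    ∃ P ∈ D, ∃ P' ∈ D, peak P = a ∧ peak P' = b ∧
      ∀ u v, WeaklyPrefers P u v → WeaklyPrefers P' v u → u = v ∨ u = a ∧ v = b := by
  obtain ⟨hne, P, hP, P', hP', h0, h1, h0', h1', hagree⟩ := adjGraph_adj.mp hab
  have hcard : 1 < Fintype.card α := Fintype.one_lt_card_iff.mpr ⟨a, b, hne⟩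
  refine ⟨P, hP, P', hP', h0, h0', fun u v huv hvu => ?_⟩
  have ha : (P.symm a : ℕ) = 0 := h0 ▸ val_symm_rk P (by omega)
  have hb : (P.symm b : ℕ) = 1 := h1 ▸ val_symm_rk P hcard
  have ha' : (P'.symm a : ℕ) = 1 := h1' ▸ val_symm_rk P' hcard
  have hb' : (P'.symm b : ℕ) = 0 := h0' ▸ val_symm_rk P' (by omega)
  have hrest : ∀ w, w = a ∨ w = b ∨ 2 ≤ (P.symm w : ℕ) ∧ P'.symm w = P.symm w := fun w => by
    by_cases hw : 2 ≤ (P.symm w : ℕ)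
    · refine .inr (.inr ⟨hw, P'.symm_apply_eq.mpr ?_⟩)
      simpa only [rk_val, P.apply_symm_apply] using hagree _ hw
    · rcases (by omega : (P.symm w : ℕ) = 0 ∨ (P.symm w : ℕ) = 1) with h | h
      · exact .inl (P.symm.injective (Fin.ext (h.trans ha.symm)))
      · exact .inr (.inl (P.symm.injective (Fin.ext (h.trans hb.symm))))
  rw [WeaklyPrefers, Fin.le_def] at huv hvu
  have hinj : (P.symm u : ℕ) = P.symm v → u = v := fun h => P.symm.injective (Fin.ext h)
  rcases hrest u with rfl | rfl | ⟨_, hu⟩ <;> rcases hrest v with rfl | rfl | ⟨_, hv⟩ <;> grind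

lemma minimallyRich_of_connected (hD : D.Nonempty) (hconn : (adjGraph D).Connected) :
    MinimallyRich D := by
  intro a
  rcases subsingleton_or_nontrivial α with _ | _
  · obtain ⟨P, hP⟩ := hD
    exact ⟨P, hP, Subsingleton.elim _ _⟩
  · obtain ⟨b, hab⟩ := hconn.preconnected.exists_adj_of_nontrivial a
    obtain ⟨P, hP, _, _, hPa, _⟩ := exists_swap_of_adj hab
    exact ⟨P, hP, hPa⟩

end Preferences

section ConstOrFix

variable {V : Type*} {G : SimpleGraph V} {φ : V → V} {u v z : V}

/-- Across every edge of `G` the map `φ` either keeps its value or fixes both endpoints. The outcome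
of a strategy-proof tops-only rule has this property, along the adjacency graph, as a function of
the common peak reported by a group of voters. -/
def ConstOrFix (G : SimpleGraph V) (φ : V → V) : Prop :=
  ∀ ⦃x y⦄, G.Adj x y → φ x = φ y ∨ φ x = x ∧ φ y = y

namespace ConstOrFix

lemma eq_or_mem_support (hφ : ConstOrFix G φ) (p : G.Walk u v) : φ u = φ v ∨ φ u ∈ p.support := by
  induction p with
  | nil => exact .inl rfl
  | cons h p ih =>
    rcases hφ h with heq | ⟨hfix, -⟩
    · exact heq ▸ ih.imp_right (List.mem_cons_of_mem _)
    · exact .inr (hfix.symm ▸ List.mem_cons_self)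

lemma eq_or_apply_apply_eq (hφ : ConstOrFix G φ) (p : G.Walk u v) :
    φ u = φ v ∨ φ (φ u) = φ u := by
  induction p with
  | nil => exact .inl rfl
  | cons h _ ih =>
    rcases hφ h with heq | ⟨hfix, -⟩
    · rwa [heq]
    · exact .inr (congrArg φ hfix)

lemma mem_support (hφ : ConstOrFix G φ) (p : G.Walk u v) (hv : φ v = v) : φ u ∈ p.support :=
  (hφ.eq_or_mem_support p).elim (fun h => (h.trans hv).symm ▸ p.end_mem_support) id

lemma eq_of_mem_support (hφ : ConstOrFix G φ) {p : G.Walk u v} (hp : p.IsPath) (hu : φ u = u)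
    (hv : φ v = v) (hz : z ∈ p.support) : φ z = z := by
  obtain ⟨q, r, rfl⟩ := SimpleGraph.Walk.mem_support_iff_exists_append.mp hz
  have hq : φ z ∈ q.support := by
    simpa only [SimpleGraph.Walk.support_reverse, List.mem_reverse] using
      hφ.mem_support q.reverse hu
  have hr : φ z ∈ r.support := hφ.mem_support r hv
  by_contra hne
  exact hp.ne_of_mem_support_of_append hne hq hr rfl

lemma eq_of_adj_of_adj (hφ : ConstOrFix G φ) (huz : G.Adj u z) (hzv : G.Adj z v) (huv : u ≠ v)
    (hu : φ u = u) (hv : φ v = v) : φ z = z := by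
  rcases hφ huz with heq | ⟨-, hfix⟩
  · rcases hφ hzv with heq' | ⟨hfix, -⟩
    · exact absurd (hu.symm.trans (heq.trans (heq'.trans hv))) huv
    · exact hfix
  · exact hfix

lemma eq_or_mem_intv (hφ : ConstOrFix G φ) (hG : G.Connected) (u v : V) :
    φ u = φ v ∨ φ u ∈ intv G u v := by
  obtain ⟨p, hp⟩ := hG.exists_walk_length_eq_dist u v
  exact (hφ.eq_or_mem_support p).imp_right (mem_intv_of_mem_support hG hp)

lemma mem_intv (hφ : ConstOrFix G φ) (hG : G.Connected) (u : V) (hv : φ v = v) :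
    φ u ∈ intv G u v :=
  (hφ.eq_or_mem_intv hG u v).elim (fun h => (h.trans hv).symm ▸ right_mem_intv G u v) id

lemma eq_of_mem_intv (hφ : ConstOrFix G φ) (hG : G.Connected) (hu : φ u = u) (hv : φ v = v)
    (hz : z ∈ intv G u v) : φ z = z := by
  have hzu := hφ.mem_intv hG z hu
  have hzv := hφ.mem_intv hG z hv
  have := hG.dist_triangle (u := u) (v := φ z) (w := v)
  refine (hG.dist_eq_zero_iff.mp ?_).symm
  rw [intv_comm] at hzu
  simp only [mem_intv_iff, G.dist_comm (u := φ z) (v := z)] at hz hzu hzv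
  omega

end ConstOrFix

end ConstOrFix

section Split

variable {V ι : Type*} [DecidableEq ι]

/-- The peak vector in which the voters of `S` report `a` and all others report `b`. -/
def splitPeaks (S : Finset ι) (a b : V) : ι → V := S.piecewise (fun _ => a) (fun _ => b)

lemma splitPeaks_empty (a b : V) : splitPeaks (∅ : Finset ι) a b = fun _ => b :=
  Finset.piecewise_empty _ _

lemma splitPeaks_self (S : Finset ι) (a : V) : splitPeaks S a a = fun _ => a :=
  S.piecewise_same _

lemma splitPeaks_of_mem {S : Finset ι} {i : ι} (hi : i ∈ S) (a b : V) : splitPeaks S a b i = a :=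
  S.piecewise_eq_of_mem _ _ hi

lemma splitPeaks_of_notMem {S : Finset ι} {i : ι} (hi : i ∉ S) (a b : V) :
    splitPeaks S a b i = b :=
  S.piecewise_eq_of_notMem _ _ hi

lemma update_splitPeaks_of_notMem {S : Finset ι} {i : ι} (hi : i ∉ S) (a b : V) :
    Function.update (splitPeaks S a b) i b = splitPeaks S a b := by
  rw [Function.update_eq_self_iff, splitPeaks_of_notMem hi]

lemma splitPeaks_insert (S : Finset ι) (i : ι) (a b : V) :
    splitPeaks (insert i S) a b = Function.update (splitPeaks S a b) i a :=
  S.piecewise_insert _ _ i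

lemma splitPeaks_univ [Fintype ι] (a b : V) :
    splitPeaks (Finset.univ : Finset ι) a b = fun _ => a :=
  Finset.piecewise_univ _ _

lemma splitPeaks_compl [Fintype ι] (S : Finset ι) (a b : V) :
    splitPeaks Sᶜ a b = splitPeaks S b a :=
  S.piecewise_compl _ _

end Split

section PeakRule

variable {α ι : Type*} [Fintype α] [Nonempty α] [DecidableEq ι]

/-- An anonymous, tops-only, strategy-proof rule on a minimally rich domain `D`, seen as the
function `F` sending a vector of reported peaks to the outcome. Strategy-proofness is stated with
weak preference, for a voter holding any preference of `D` with the reported peak. -/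
structure IsAnonymousPeakRule (D : Set (Pref α)) (F : (ι → α) → α) : Prop where
  minimallyRich : MinimallyRich D
  weaklyPrefers_update : ∀ P ∈ D, ∀ v i, v i = peak P → ∀ b,
    WeaklyPrefers P (F v) (F (Function.update v i b))
  unanimous : ∀ a, F (fun _ => a) = a
  anonymous : ∀ v (σ : Equiv.Perm ι), F (v ∘ σ) = F v

lemma exists_isAnonymousPeakRule {n : ℕ} {D : Set (Pref α)} (hD : MinimallyRich D)
    {f : (Fin n → Pref α) → α} (hrule : IsRule D f) (htops : TopsOnly D f)
    (hsp : StrategyProof D f) (hanon : Anonymous D f) :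
    ∃ F : (Fin n → α) → α, IsAnonymousPeakRule D F := by
  obtain ⟨sel, hsel⟩ := Classical.skolem.mp hD
  refine ⟨fun v => f (sel ∘ v), hD, fun P hP v i hi b => ?_,
    fun a => hrule _ (fun _ => (hsel a).1) a (fun _ => (hsel a).2),
    fun v σ => hanon _ (fun j => (hsel (v j)).1) σ⟩
  have hin : InDom D (Function.update (sel ∘ v) i P) :=
    (Function.forall_update_iff _ fun _ Q => Q ∈ D).mpr ⟨hP, fun j _ => (hsel (v j)).1⟩
  have hrep : f (sel ∘ v) = f (Function.update (sel ∘ v) i P) :=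
    htops _ _ (fun j => (hsel (v j)).1) hin <|
      (Function.forall_update_iff _ fun j Q => peak (sel (v j)) = peak Q).mpr
        ⟨(hsel _).2.trans hi, fun _ _ => rfl⟩
  have hdev := hsp _ hin i (sel b) (hsel b).1
  rw [Function.update_idem, ← Function.comp_update, ← hrep, Function.update_self] at hdev
  exact weaklyPrefers_iff.mpr hdev

namespace IsAnonymousPeakRule

variable {D : Set (Pref α)} {F : (ι → α) → α} {v v' : ι → α} {a b x y : α} {i j : ι}

lemma apply_update_eq_of_eq (hF : IsAnonymousPeakRule D F) (hv : v i = v j) (a : α) :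
    F (Function.update v i a) = F (Function.update v j a) := by
  have hvσ : v ∘ Equiv.swap i j = v := by
    rw [Equiv.comp_swap_eq_update, hv, Function.update_eq_self, ← hv, Function.update_eq_self]
  rw [← hF.anonymous (Function.update v j a) (Equiv.swap i j), Function.update_comp_equiv, hvσ,
    Equiv.symm_swap, Equiv.swap_apply_right]

lemma weaklyPrefers_of_forall [Finite ι] (hF : IsAnonymousPeakRule D F) {P : Pref α} (hP : P ∈ D)
    (h : ∀ i, v' i = v i ∨ v i = peak P) : WeaklyPrefers P (F v) (F v') := by
  cases nonempty_fintype ι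
  suffices ∀ S : Finset ι, WeaklyPrefers P (F v) (F (S.piecewise v' v)) by
    simpa only [Finset.piecewise_univ] using this Finset.univ
  intro S
  induction S using Finset.induction_on with
  | empty => rw [Finset.piecewise_empty]; exact le_rfl
  | @insert i S hi ih =>
    rw [Finset.piecewise_insert]
    have hvi : S.piecewise v' v i = v i := S.piecewise_eq_of_notMem _ _ hi
    rcases h i with heq | hpeak
    · rwa [heq, ← hvi, Function.update_eq_self]
    · exact ih.trans (hF.weaklyPrefers_update P hP _ i (hvi.trans hpeak) _)

lemma eq_of_forall_eq_or_eq [Finite ι] (hF : IsAnonymousPeakRule D F) (ha : F v = a)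
    (h : ∀ i, v' i = v i ∨ v' i = a) : F v' = a := by
  obtain ⟨P, hP, rfl⟩ := hF.minimallyRich a
  have hpref := hF.weaklyPrefers_of_forall hP (v := v') (v' := v) fun i => (h i).imp_left Eq.symm
  exact (ha ▸ hpref).antisymm (weaklyPrefers_peak P _)

lemma eq_or_eq_and_eq_of_adj [Finite ι] (hF : IsAnonymousPeakRule D F)
    (hab : (adjGraph D).Adj a b) (h : ∀ i, v' i = v i ∨ v i = a ∧ v' i = b) :
    F v = F v' ∨ F v = a ∧ F v' = b := by
  obtain ⟨P, hP, P', hP', hPa, hPb, hswap⟩ := exists_swap_of_adj hab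
  exact hswap _ _
    (hF.weaklyPrefers_of_forall hP fun i => (h i).imp_right fun hi => hi.1.trans hPa.symm)
    (hF.weaklyPrefers_of_forall hP' fun i => (h i).imp Eq.symm fun hi => hi.2.trans hPb.symm)

lemma constOrFix_piecewise [Finite ι] (hF : IsAnonymousPeakRule D F) (S : Finset ι) (v : ι → α) :
    ConstOrFix (adjGraph D) fun z => F (S.piecewise (fun _ => z) v) := by
  intro x y hxy
  refine hF.eq_or_eq_and_eq_of_adj hxy fun i => ?_
  by_cases hi : i ∈ S
  · exact .inr ⟨S.piecewise_eq_of_mem _ _ hi, S.piecewise_eq_of_mem _ _ hi⟩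
  · simp only [S.piecewise_eq_of_notMem _ _ hi, true_or]

lemma constOrFix_update [Finite ι] (hF : IsAnonymousPeakRule D F) (i : ι) (v : ι → α) :
    ConstOrFix (adjGraph D) fun z => F (Function.update v i z) := by
  simpa only [Finset.piecewise_singleton] using hF.constOrFix_piecewise {i} v

lemma constOrFix_splitPeaks_left [Finite ι] (hF : IsAnonymousPeakRule D F) (S : Finset ι)
    (b : α) : ConstOrFix (adjGraph D) fun a => F (splitPeaks S a b) :=
  hF.constOrFix_piecewise S fun _ => b

lemma constOrFix_splitPeaks_right [Finite ι] (hF : IsAnonymousPeakRule D F) (S : Finset ι)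
    (a : α) : ConstOrFix (adjGraph D) fun b => F (splitPeaks S a b) := by
  cases nonempty_fintype ι
  simpa only [splitPeaks_compl] using hF.constOrFix_splitPeaks_left Sᶜ a

end IsAnonymousPeakRule

end PeakRule

section AdjacencyTree

variable {α ι : Type*} [Fintype α] [Nonempty α] [DecidableEq ι] [Finite ι]
  {D : Set (Pref α)} {F : (ι → α) → α} {x y z : α}

namespace IsAnonymousPeakRule

lemma apply_update_splitPeaks_swap (hF : IsAnonymousPeakRule D F) {S : Finset ι} {i j : ι}
    (hi : i ∉ S) (hj : j ∉ S) (hij : i ≠ j) (h : F (Function.update (splitPeaks S x y) i z) = z) :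
    F (Function.update (splitPeaks S x z) i y) = z := by
  have hv : splitPeaks S x y i = splitPeaks S x y j := by
    rw [splitPeaks_of_notMem hi, splitPeaks_of_notMem hj]
  rw [hF.apply_update_eq_of_eq hv] at h
  refine hF.eq_of_forall_eq_or_eq h fun k => ?_
  rcases eq_or_ne k i with rfl | hki
  · rw [Function.update_self, Function.update_of_ne hij, splitPeaks_of_notMem hi]
    exact .inl rfl
  rw [Function.update_of_ne hki]
  by_cases hk : k ∈ S
  · rw [Function.update_of_ne (ne_of_mem_of_not_mem hk hj), splitPeaks_of_mem hk,
      splitPeaks_of_mem hk]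
    exact .inl rfl
  · exact .inr (splitPeaks_of_notMem hk x z)

/- If the new member `i` of the coalition `S` could move the outcome to `x`, the outcome would fix
`x` and `y`, hence also `z`, as a function of the peak of `i`. Exchanging `i` with `j` then makes
the outcome `z` where, `y` lying between `x` and `z` on the cycle, it has to be `y`. -/
lemma apply_splitPeaks_insert (hF : IsAnonymousPeakRule D F) {q : (adjGraph D).Walk x y}
    (hq : q.IsPath) (hxy : (adjGraph D).Adj x y) (hyz : (adjGraph D).Adj y z)
    (hz : z ∈ q.support) (hzx : z ≠ x) {S : Finset ι} {i j : ι} (hi : i ∉ S) (hj : j ∉ S)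
    (hij : i ≠ j) (hS : F (splitPeaks S x y) = y) : F (splitPeaks (insert i S) x y) = y := by
  have hi_y : F (Function.update (splitPeaks S x y) i y) = y := by
    rwa [update_splitPeaks_of_notMem hi]
  rw [splitPeaks_insert]
  by_contra hne
  have hi_x : F (Function.update (splitPeaks S x y) i x) = x :=
    (hF.constOrFix_update i _ hxy).elim (fun h => absurd (h.trans hi_y) hne) And.left
  have hi_z : F (Function.update (splitPeaks S x y) i z) = z :=
    (hF.constOrFix_update i _).eq_of_mem_support hq hi_x hi_y hz
  have hSz_x : F (Function.update (splitPeaks S x z) i x) = x := by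
    rw [← splitPeaks_insert] at hi_x ⊢
    rcases hF.constOrFix_splitPeaks_right (insert i S) x hyz with heq | ⟨hfix, -⟩
    · exact heq.symm.trans hi_x
    · exact absurd (hi_x.symm.trans hfix) hxy.ne
  have hSz_z : F (Function.update (splitPeaks S x z) i z) = z := by
    rw [update_splitPeaks_of_notMem hi]
    exact (hF.constOrFix_splitPeaks_right S x).eq_of_mem_support hq
      (by rw [splitPeaks_self, hF.unanimous]) hS hz
  have hSz_y : F (Function.update (splitPeaks S x z) i y) = y :=
    (hF.constOrFix_update i _).eq_of_adj_of_adj hxy hyz hzx.symm hSz_x hSz_z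
  exact hyz.ne (hSz_y.symm.trans (hF.apply_update_splitPeaks_swap hi hj hij hi_z))

lemma apply_splitPeaks_of_path (hF : IsAnonymousPeakRule D F) {q : (adjGraph D).Walk x y}
    (hq : q.IsPath) (hxy : (adjGraph D).Adj x y) (hedge : s(x, y) ∉ q.edges) {S : Finset ι}
    (hS : ∃ j, j ∉ S) : F (splitPeaks S x y) = y := by
  have hnil : ¬ q.Nil := SimpleGraph.Walk.not_nil_of_ne hxy.ne
  have hyz := (q.adj_penultimate hnil).symm
  have hzx : q.penultimate ≠ x := by
    intro h
    have hmem := q.mk_penultimate_end_mem_edges hnil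
    rw [h] at hmem
    exact hedge hmem
  induction S using Finset.induction_on with
  | empty => rw [splitPeaks_empty, hF.unanimous]
  | @insert i S hi ih =>
    obtain ⟨j, hj⟩ := hS
    rw [Finset.mem_insert, not_or] at hj
    exact hF.apply_splitPeaks_insert hq hxy hyz (q.getVert_mem_support _) hzx hi hj.2
      (Ne.symm hj.1) (ih ⟨j, hj.2⟩)

lemma isAcyclic_adjGraph [Nontrivial ι] (hF : IsAnonymousPeakRule D F) :
    (adjGraph D).IsAcyclic := by
  rintro y (_ | @⟨_, x, _, hyx, q⟩) hc
  · exact hc.ne_nil rfl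
  obtain ⟨hq, hedge⟩ := (SimpleGraph.Walk.cons_isCycle_iff q hyx).mp hc
  obtain ⟨i, j, hij⟩ := exists_pair_ne ι
  cases nonempty_fintype ι
  have hy : F (splitPeaks {i} x y) = y := hF.apply_splitPeaks_of_path hq hyx.symm
    (Sym2.eq_swap ▸ hedge) ⟨j, Finset.notMem_singleton.mpr hij.symm⟩
  have hx : F (splitPeaks {i}ᶜ y x) = x := hF.apply_splitPeaks_of_path hq.reverse hyx
    (by simpa using hedge) ⟨i, by simp⟩
  rw [splitPeaks_compl] at hx
  exact hyx.ne (hy.symm.trans hx)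

end IsAnonymousPeakRule

end AdjacencyTree

section Sink

/- A vertex `x` maximizing the number of `a` with `g a x = x` works: if `w := g a x ≠ x`, the
neighbour of `x` towards `w` would do better. -/
lemma exists_forall_apply_eq_of_constOrFix {V : Type*} [Finite V] {G : SimpleGraph V}
    (hG : G.Connected) {g : V → V → V} (hleft : ∀ b, ConstOrFix G fun a => g a b)
    (hright : ∀ a, ConstOrFix G (g a)) (hself : ∀ a, g a a = a)
    (hsymm : ∀ a b, g a b = a → g b a = a) : ∃ x, ∀ a, g a x = x := by
  have := hG.nonempty
  obtain ⟨x, hmax⟩ := Finite.exists_max fun x => {a | g a x = x}.ncard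
  refine ⟨x, fun a => ?_⟩
  by_contra hax
  obtain ⟨p⟩ := hG.preconnected a x
  have hw : g (g a x) x = g a x :=
    ((hleft x).eq_or_apply_apply_eq p).resolve_left fun h => hax (h.trans (hself x))
  obtain ⟨y, hxy, hyw⟩ := exists_adj_mem_intv hG (Ne.symm hax)
  have hyx : g y x = y := (hleft x).eq_of_mem_intv hG (hself x) hw hyw
  have hxy_y : g x y = y := hsymm y x hyx
  have hsub : {a | g a x = x} ⊆ {a | g a y = y} := by
    intro u (hu : g u x = x)
    rcases hright u hxy with heq | ⟨-, hfix⟩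
    · obtain ⟨q⟩ := hG.preconnected u x
      rcases (hleft y).eq_or_apply_apply_eq q with h | h
      · exact h.trans hxy_y
      · rw [← heq, hu] at h
        exact absurd (h.symm.trans hxy_y) hxy.ne
    · exact hfix
  have hssub : {a | g a x = x} ⊂ {a | g a y = y} :=
    hsub.ssubset_of_mem_notMem (a := y) (hself y) fun h : g y x = x => hxy.ne (h.symm.trans hyx)
  exact (Set.ncard_lt_ncard hssub (Set.toFinite _)).not_ge (hmax y)

end Sink

section SemiSinglePeaked

variable {α ι : Type*} [Fintype α] [Nonempty α] [DecidableEq ι] [Finite ι]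
  {D : Set (Pref α)} {F : (ι → α) → α} {P : Pref α} {a b c d x : α} {i : ι}

namespace IsAnonymousPeakRule

lemma splitPeaks_singleton_symm [Nontrivial ι] (hF : IsAnonymousPeakRule D F)
    (h : F (splitPeaks {i} a b) = a) : F (splitPeaks {i} b a) = a := by
  obtain ⟨j, hji⟩ := exists_ne i
  have hj : F (Function.update (fun _ => b) j a) = a := by
    rw [hF.apply_update_eq_of_eq (i := j) (j := i) rfl]
    rwa [splitPeaks, Finset.piecewise_singleton] at h
  refine hF.eq_of_forall_eq_or_eq hj fun k => ?_
  rcases eq_or_ne k i with rfl | hki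
  · rw [splitPeaks_of_mem (Finset.mem_singleton_self k), Function.update_of_ne hji.symm]
    exact .inl rfl
  · exact .inr (splitPeaks_of_notMem (Finset.notMem_singleton.mpr hki) b a)

lemma exists_sink [Nontrivial ι] (hF : IsAnonymousPeakRule D F) (hG : (adjGraph D).Connected)
    (i : ι) : ∃ x, ∀ a, F (splitPeaks {i} a x) = x :=
  exists_forall_apply_eq_of_constOrFix hG (hF.constOrFix_splitPeaks_left {i})
    (hF.constOrFix_splitPeaks_right {i}) (fun a => by rw [splitPeaks_self, hF.unanimous])
    fun _ _ => hF.splitPeaks_singleton_symm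

lemma apply_splitPeaks_eq_of_mem_intv (hF : IsAnonymousPeakRule D F)
    (hG : (adjGraph D).Connected) {S : Finset ι} (hd : F (splitPeaks S a d) = d)
    (hc : c ∈ intv (adjGraph D) a d) : F (splitPeaks S a c) = c :=
  (hF.constOrFix_splitPeaks_right S a).eq_of_mem_intv hG
    (by rw [splitPeaks_self, hF.unanimous]) hd hc

lemma apply_update_eq_of_adj (hF : IsAnonymousPeakRule D F) (hG : (adjGraph D).Connected)
    (hcd : (adjGraph D).Adj c d) (hc : c ∈ intv (adjGraph D) a d) {w : ι → α} {i j : ι}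
    (hi : w i = d) (hj : w j = d) (ha : F (Function.update w i a) = d) :
    F (Function.update w j c) = d := by
  have hwd : F (Function.update w j d) = d := by
    rw [Function.update_eq_self_iff.mpr hj.symm]
    refine hF.eq_of_forall_eq_or_eq ha fun k => ?_
    rcases eq_or_ne k i with rfl | hki
    · exact .inr hi
    · exact .inl (Function.update_of_ne hki _ _).symm
  rcases hF.constOrFix_update j w hcd with heq | ⟨hjc, -⟩
  · exact heq.trans hwd
  have hic : F (Function.update w i c) = c :=
    (hF.apply_update_eq_of_eq (hi.trans hj.symm) c).trans hjc
  have hd : F (Function.update w i a) ∈ intv (adjGraph D) a c :=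
    (hF.constOrFix_update i w).mem_intv hG a hic
  rw [ha] at hd
  exact absurd (intv_antisymm hG hc hd) hcd.ne

lemma weaklyPrefers_of_update_ne (hF : IsAnonymousPeakRule D F) (hG : (adjGraph D).Connected)
    (hP : P ∈ D) (hcd : (adjGraph D).Adj c d) (hc : c ∈ intv (adjGraph D) (peak P) d)
    {w : ι → α} {i j : ι} (hij : i ≠ j) (hi : w i = d) (hj : w j = d)
    (hd : F (Function.update w i (peak P)) = d)
    (hne : F (Function.update (Function.update w i (peak P)) j c) ≠ d) : WeaklyPrefers P c d := by
  have hjd : Function.update (Function.update w i (peak P)) j d =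
      Function.update w i (peak P) :=
    Function.update_eq_self_iff.mpr <| by rw [Function.update_of_ne hij.symm, hj]
  have hjc : F (Function.update (Function.update w j c) i (peak P)) = c := by
    rw [Function.update_comm hij.symm]
    rcases hF.constOrFix_update j (Function.update w i (peak P)) hcd with heq | ⟨hfix, -⟩
    · exact absurd (heq.trans ((congrArg F hjd).trans hd)) hne
    · exact hfix
  have hid : Function.update (Function.update w j c) i d = Function.update w j c :=
    Function.update_eq_self_iff.mpr <| by rw [Function.update_of_ne hij, hi]
  have hsp := hF.weaklyPrefers_update P hP (Function.update (Function.update w j c) i (peak P)) i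
    (Function.update_self _ _ _) d
  rwa [hjc, Function.update_idem, hid, hF.apply_update_eq_of_adj hG hcd hc hi hj hd] at hsp

/- Moving the voters other than `i` one by one from `d` to `c`, the outcome switches from `d` to `c`
at some voter `j`; at that profile voter `i` could still enforce `d` by reporting it. -/
lemma weaklyPrefers_of_adj (hF : IsAnonymousPeakRule D F) (hG : (adjGraph D).Connected)
    (hP : P ∈ D) (hd : F (splitPeaks {i} (peak P) d) = d) (hcd : (adjGraph D).Adj c d)
    (hc : c ∈ intv (adjGraph D) (peak P) d) : WeaklyPrefers P c d := by
  have hcfix := hF.apply_splitPeaks_eq_of_mem_intv hG hd hc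
  rw [splitPeaks, Finset.piecewise_singleton] at hd hcfix
  obtain ⟨S, j, hjS, hSd, hSc⟩ : ∃ S : Finset ι, ∃ j ∉ S,
      F (Function.update (splitPeaks S c d) i (peak P)) = d ∧
        F (Function.update (splitPeaks (insert j S) c d) i (peak P)) ≠ d := by
    by_contra! h
    cases nonempty_fintype ι
    refine hcd.ne (hcfix.symm.trans ?_)
    rw [← splitPeaks_univ c d]
    induction (Finset.univ : Finset ι) using Finset.induction_on with
    | empty => rwa [splitPeaks_empty]
    | insert j S hj ih => exact h S j hj ih
  have hji : j ≠ i := by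
    rintro rfl
    rw [splitPeaks_insert, Function.update_idem] at hSc
    exact hSc hSd
  refine hF.weaklyPrefers_of_update_ne hG hP hcd hc (w := Function.update (splitPeaks S c d) i d)
    hji.symm (Function.update_self _ _ _) ?_ (by rwa [Function.update_idem]) ?_
  · rw [Function.update_of_ne hji, splitPeaks_of_notMem hjS]
  · rwa [Function.update_idem, Function.update_comm hji.symm, ← splitPeaks_insert]

lemma weaklyPrefers_of_mem_intv (hF : IsAnonymousPeakRule D F) (hG : (adjGraph D).Connected)
    (hP : P ∈ D) (hd : F (splitPeaks {i} (peak P) d) = d)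
    (hc : c ∈ intv (adjGraph D) (peak P) d) : WeaklyPrefers P c d := by
  induction hn : (adjGraph D).dist c d generalizing d with
  | zero => rw [hG.dist_eq_zero_iff.mp hn]; exact le_rfl
  | succ n ih =>
    have hcd : d ≠ c := fun h => by simp [h] at hn
    obtain ⟨e, hde, hec⟩ := exists_adj_mem_intv hG hcd
    rw [intv_comm] at hec
    have he : e ∈ intv (adjGraph D) (peak P) d := intv_subset_intv_right hG hc hec
    have hdist : (adjGraph D).dist c e = n := by
      have := SimpleGraph.dist_eq_one_iff_adj.mpr hde.symm
      rw [mem_intv_iff] at hec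
      omega
    exact (ih (hF.apply_splitPeaks_eq_of_mem_intv hG hd he)
      (mem_intv_left_of_mem_intv hG hc hec) hdist).trans
      (hF.weaklyPrefers_of_adj hG hP hd hde.symm he)

lemma semiSP_adjGraph (hF : IsAnonymousPeakRule D F) (hT : (adjGraph D).IsTree)
    (hx : ∀ a, F (splitPeaks {i} a x) = x) (hP : P ∈ D) : SemiSP (adjGraph D) x P := by
  have hG := hT.connected
  have hfix : ∀ d ∈ intv (adjGraph D) (peak P) x, F (splitPeaks {i} (peak P) d) = d :=
    fun d hd => hF.apply_splitPeaks_eq_of_mem_intv hG (hx _) hd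
  refine ⟨fun c d _ hd hcd hc => (hF.weaklyPrefers_of_mem_intv hG hP (hfix d hd) hc).prefers hcd,
    fun c hc => ?_⟩
  obtain ⟨hm, hproj⟩ := projOn_isProjPt
    (exists_isProjPt hT (pathClosed_intv hT (peak P) x) ⟨x, right_mem_intv _ _ x⟩ c)
  set m := projOn (adjGraph D) (intv (adjGraph D) (peak P) x) c
  set w := F (splitPeaks {i} (peak P) c) with hw
  have hwfix : F (splitPeaks {i} (peak P) w) = w := hF.eq_of_forall_eq_or_eq hw.symm fun k => by
    by_cases hk : k ∈ ({i} : Finset ι)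
    · rw [splitPeaks_of_mem hk, splitPeaks_of_mem hk]
      exact .inl rfl
    · exact .inr (splitPeaks_of_notMem hk _ _)
  have hwm : w ∈ intv (adjGraph D) c m :=
    (hF.constOrFix_splitPeaks_right {i} (peak P)).mem_intv hG c (hfix m hm)
  have hmw : m ∈ intv (adjGraph D) (peak P) w := by
    have hmc := hproj _ (left_mem_intv _ (peak P) x)
    rw [intv_comm] at hmc hwm
    exact mem_intv_left_of_mem_intv hG hmc hwm
  have hwc : WeaklyPrefers P w c := by
    have hsp := hF.weaklyPrefers_update P hP (splitPeaks {i} (peak P) c) i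
      (splitPeaks_of_mem (Finset.mem_singleton_self i) _ _) c
    have hdev : Function.update (splitPeaks {i} (peak P) c) i c = fun _ => c := by
      rw [splitPeaks, Finset.piecewise_singleton, Function.update_idem, Function.update_eq_self]
    rwa [hdev, hF.unanimous] at hsp
  exact ((hF.weaklyPrefers_of_mem_intv hG hP hwfix hmw).trans hwc).prefers
    (ne_of_mem_of_not_mem hm hc)

end IsAnonymousPeakRule

end SemiSinglePeaked

theorem stmt5_anonymous_classification_general {α : Type*} [Fintype α] [Nonempty α]
    {D : Set (Pref α)} (hD : D.Nonempty) (hconn : PathConnectedDom D) {n : ℕ} (hn : 2 ≤ n) :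
    List.TFAE [∃ f : (Fin n → Pref α) → α,
        IsRule D f ∧ TopsOnly D f ∧ StrategyProof D f ∧ Anonymous D f,
      SemiSPDomain D,
      ∃ (T : SimpleGraph α) (xbar : α), T.IsTree ∧
        StrategyProof D (fun P : Fin n → Pref α => projRule T xbar P)] := by
  tfae_have 1 → 2 := by
    rintro ⟨f, hrule, htops, hsp, hanon⟩
    have : Nontrivial (Fin n) := Fin.nontrivial_iff_two_le.mpr hn
    obtain ⟨F, hF⟩ := exists_isAnonymousPeakRule (minimallyRich_of_connected hD hconn)
      hrule htops hsp hanon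
    obtain ⟨x, hx⟩ := hF.exists_sink hconn ⟨0, by omega⟩
    have hT : (adjGraph D).IsTree := ⟨hconn, hF.isAcyclic_adjGraph⟩
    exact ⟨adjGraph D, x, hT, fun P hP => hF.semiSP_adjGraph hT hx hP, hconn⟩
  tfae_have 2 → 3 := by
    rintro ⟨T, x, hT, hsub, -⟩
    exact ⟨T, x, hT, projRule_strategyProof hT hsub hn⟩
  tfae_have 3 → 1 := by
    rintro ⟨T, x, hT, hsp⟩
    exact ⟨projRule T x, projRule_isRule hT x (by omega) D, projRule_topsOnly T x D, hsp,
      projRule_anonymous T x D⟩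
  tfae_finish

/-- on a non-dictatorial, unidimensional domain and for any fixed
`n ≥ 2`, existence of an anonymous, tops-only and strategy-proof rule is
equivalent to being a semi-single-peaked domain, and to the existence of a
strategy-proof projection rule. -/
theorem stmt5_anonymous_classification (D : Set (Pref A)) (hD : D.Nonempty)
    (hcard : 3 ≤ Fintype.card A) (huni : Unidimensional D)
    (hnd : ¬ DictatorialDomain D) (n : ℕ) (hn : 2 ≤ n) :
    ((∃ f : (Fin n → Pref A) → A,
        IsRule D f ∧ TopsOnly D f ∧ StrategyProof D f ∧ Anonymous D f) ↔
      SemiSPDomain D) ∧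
    ((∃ f : (Fin n → Pref A) → A,
        IsRule D f ∧ TopsOnly D f ∧ StrategyProof D f ∧ Anonymous D f) ↔
      ∃ (T : SimpleGraph A) (xbar : A), T.IsTree ∧
        StrategyProof D (fun P : Fin n → Pref A => projRule T xbar P)) := by
  have h := stmt5_anonymous_classification_general hD huni.1 hn
  exact ⟨h.out 0 1, h.out 0 2⟩
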